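/- Let A be a pushdown timed automaton. For any states s₀ and s₁, any initialized pair (v₀,v₁) of clock valuations, and any stack words w₀ and w₁: (s₀,v₀,w₀) →*_A (s₁,v₁,w₁) iff there exists a pattern η such that (v₀,v₁) has pattern η and (s₀,int(v₀),w₀) →*_{A,η} (s₁,int(v₁),w₁). -/

import Mathlib

open scoped BigOperators

namespace PTApaper

/-! ## Clock valuations -/

/-- A (raw) clock valuation on clocks `x_0, …, x_k`. -/
abbrev Val (k : ℕ) := Fin (k+1) → ℝ

/-- A discrete clock valuation. -/
abbrev DVal (k : ℕ) := Fin (k+1) → ℕ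

/-- A clock valuation takes nonnegative values. -/
def IsVal {k : ℕ} (v : Val k) : Prop := ∀ i, 0 ≤ v i

/-- A valuation is initial if the auxiliary clock `x_0` has value 0. -/
def Initial {k : ℕ} (v : Val k) : Prop := v 0 = 0

/-- The integral part `int(v)` of a valuation. -/
noncomputable def intPart {k : ℕ} (v : Val k) : DVal k := fun i => (⌊v i⌋).toNat

/-- The fractional parts of the relative representation `rel(v)`:
`fract(rel(v))(0) = fract (1 - fract (v 0))` and
`fract(rel(v))(i) = fract (fract (v i) + fract(rel(v))(0))` for `i ∈ K⁺`. -/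
noncomputable def relFract {k : ℕ} (v : Val k) : Fin (k+1) → ℝ := fun i =>
  if i = 0 then Int.fract (1 - Int.fract (v 0))
  else Int.fract (Int.fract (v i) + Int.fract (1 - Int.fract (v 0)))

/-- Synchronous clock progress `v + δ`. -/
def shift {k : ℕ} (v : Val k) (δ : ℝ) : Val k := fun i => v i + δ

/-- Clock reset `v↓_r`. -/
def resetVal {k : ℕ} (r : Finset (Fin (k+1))) (v : Val k) : Val k :=
  fun i => if i ∈ r then 0 else v i

/-! ## Patterns -/

/-- A raw pattern: a finite sequence of subsets of `K⁰ ∪ K¹`, where the index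
`(i, false)` stands for `i⁰` and `(i, true)` stands for `i¹`. -/
abbrev PatSeq (k : ℕ) := List (Finset (Fin (k+1) × Bool))

/-- The well-formedness conditions making `η = p₀,…,p_n` a pattern:
`0 ≤ n < 2(k+1)`, the `p_m` are nonempty and pairwise disjoint, `0⁰ ∈ p₀`,
and `p₀ ∪ … ∪ p_n = K⁰ ∪ K¹`. -/
def IsPattern {k : ℕ} (η : PatSeq k) : Prop :=
  η.length ≤ 2*(k+1) ∧
  (∀ p ∈ η, p.Nonempty) ∧
  η.Pairwise Disjoint ∧
  ((0 : Fin (k+1)), false) ∈ η.getD 0 ∅ ∧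
  (∀ x : Fin (k+1) × Bool, ∃ p ∈ η, x ∈ p)

/-- `bval v₀ v₁ b` is `v_b`. -/
def bval {k : ℕ} (v₀ v₁ : Val k) : Bool → Val k
  | false => v₀
  | true => v₁

/-- The defining ordering condition for "`(v₀,v₁)` has pattern `η = p₀,…,p_n`":
for all positions `m, m'`, copies `b, b'` and clocks `i, i'` with `i^b ∈ p_m` and
`i'^{b'} ∈ p_{m'}`, `fract(rel(v_b))(i) = fract(rel(v_{b'}))(i')` iff `m = m'`, and
`fract(rel(v_b))(i) < fract(rel(v_{b'}))(i')` iff `m < m'`. -/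
def HasPatternOrd {k : ℕ} (v₀ v₁ : Val k) (η : PatSeq k) : Prop :=
  ∀ m m' : Fin η.length, ∀ b b' : Bool, ∀ i i' : Fin (k+1),
    (i, b) ∈ η.get m → (i', b') ∈ η.get m' →
      ((relFract (bval v₀ v₁ b) i = relFract (bval v₀ v₁ b') i' ↔ m = m') ∧
       (relFract (bval v₀ v₁ b) i < relFract (bval v₀ v₁ b') i' ↔ (m : ℕ) < (m' : ℕ)))

/-- `(v₀,v₁)` has pattern `η` (written `[(v₀,v₁)] = η`). -/
def PatternOf {k : ℕ} (v₀ v₁ : Val k) (η : PatSeq k) : Prop :=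
  IsPattern η ∧ HasPatternOrd v₀ v₁ η

/-- A pattern is initial if it is the pattern of `(v₀,v₀)` for some initial valuation `v₀`. -/
def InitialPattern {k : ℕ} (η : PatSeq k) : Prop :=
  ∃ v₀ : Val k, IsVal v₀ ∧ Initial v₀ ∧ PatternOf v₀ v₀ η

/-- The equivalence `(v₀¹,v₁) ≈ (v₀²,v₂)`: same pattern and same integral parts. -/
def PairEquiv {k : ℕ} (va vb vc vd : Val k) : Prop :=
  (∃ η : PatSeq k, PatternOf va vb η ∧ PatternOf vc vd η) ∧
  intPart va = intPart vc ∧ intPart vb = intPart vd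

/-! ## now-position, Next, next, reset -/

/-- The index of the now-position, i.e. the position containing `0¹`. -/
def nowIdx {k : ℕ} (η : PatSeq k) : ℕ :=
  η.findIdx fun p => decide (((0 : Fin (k+1)), true) ∈ p)

/-- A merge-pattern: the now-position is the singleton `{0¹}`. -/
def IsMergePat {k : ℕ} (η : PatSeq k) : Prop :=
  η.getD (nowIdx η) ∅ = ({((0 : Fin (k+1)), true)} : Finset (Fin (k+1) × Bool))

/-- A split-pattern: a pattern that is not a merge-pattern. -/
def IsSplitPat {k : ℕ} (η : PatSeq k) : Prop := ¬ IsMergePat η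

/-- The next pattern `Next(η)`. -/
def NextPat {k : ℕ} (η : PatSeq k) : PatSeq k :=
  let i := nowIdx η
  if η.getD i ∅ = ({((0 : Fin (k+1)), true)} : Finset (Fin (k+1) × Bool)) then
    -- merge case : `p₀, …, p_{i-1} ∪ {0¹}, p_{i+1}, …, p_n`
    η.take (i-1) ++ [η.getD (i-1) ∅ ∪ {((0 : Fin (k+1)), true)}] ++ η.drop (i+1)
  else if i = 0 then
    -- split case with `i = 0` : `p₀ ∖ {0¹}, p₁, …, p_n, {0¹}`
    (η.getD 0 ∅ \ {((0 : Fin (k+1)), true)}) :: (η.drop 1 ++ [{((0 : Fin (k+1)), true)}])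
  else
    -- split case with `i > 0` : `p₀, …, p_{i-1}, {0¹}, p_i ∖ {0¹}, p_{i+1}, …, p_n`
    η.take i ++ [{((0 : Fin (k+1)), true)}, η.getD i ∅ \ {((0 : Fin (k+1)), true)}]
      ++ η.drop (i+1)

/-- The counter update of `next(η,u)`. -/
def nextD {k : ℕ} (η : PatSeq k) (u : DVal k) : DVal k :=
  let i := nowIdx η
  if η.getD i ∅ = ({((0 : Fin (k+1)), true)} : Finset (Fin (k+1) × Bool)) then
    fun j =>
      if j = 0 then (if i = 1 then u 0 + 1 else u 0)
      else (if (j, true) ∈ η.getD (i-1) ∅ then u j + 1 else u j)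
  else u

/-- `next(η,u)`. -/
def nextPair {k : ℕ} (η : PatSeq k) (u : DVal k) : PatSeq k × DVal k :=
  (NextPat η, nextD η u)

/-- The pattern part of `reset_r(η,u)`: all indices `j¹`, `j ∈ r`, are moved into the
now-position, and entries that become empty are deleted. -/
def ResetPat {k : ℕ} (r : Finset (Fin (k+1))) (η : PatSeq k) : PatSeq k :=
  let r1 : Finset (Fin (k+1) × Bool) := r.image (fun j => (j, true))
  let i := nowIdx η
  (η.mapIdx (fun m p => if m = i then p ∪ r1 else p \ r1)).filter (fun p => decide (p ≠ ∅))

/-- The counter update of `reset_r(η,u)`. -/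
def resetD {k : ℕ} (r : Finset (Fin (k+1))) (u : DVal k) : DVal k :=
  fun j => if j ∈ r then 0 else u j

/-- `reset_r(η,u)`. -/
def resetPair {k : ℕ} (r : Finset (Fin (k+1))) (η : PatSeq k) (u : DVal k) :
    PatSeq k × DVal k :=
  (ResetPat r η, resetD r u)

/-! ## Pattern changes -/

/-- `v` has no pattern change for `δ`. -/
def NoChange {k : ℕ} (v₀ v : Val k) (δ : ℝ) : Prop :=
  ∃ η : PatSeq k, PatternOf v₀ v η ∧
    ∀ δ', 0 ≤ δ' → δ' ≤ δ → PatternOf v₀ (shift v δ') η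

/-- `v` has one pattern change for `δ`. -/
def OneChange {k : ℕ} (v₀ v : Val k) (δ : ℝ) : Prop :=
  ∃ η η' : PatSeq k, PatternOf v₀ v η ∧ PatternOf v₀ (shift v δ) η' ∧
    NextPat η = η' ∧
    ((∀ δ', 0 < δ' → δ' < δ → PatternOf v₀ (shift v δ') η) ∨
     (∀ δ', 0 < δ' → δ' < δ → PatternOf v₀ (shift v δ') η'))

/-- `v` has `n` pattern changes for `δ` (for `n ≥ 1`): `δ = δ₁ + … + δ_n` with each
`δ_j > 0` and `v + δ₁ + … + δ_j` has one pattern change for `δ_{j+1}`. -/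
def NChanges {k : ℕ} (v₀ v : Val k) (n : ℕ) (δ : ℝ) : Prop :=
  ∃ d : ℕ → ℝ, (∀ j < n, 0 < d j) ∧ (∑ j ∈ Finset.range n, d j) = δ ∧
    ∀ j < n, OneChange v₀ (shift v (∑ j' ∈ Finset.range j, d j')) (d j)

/-! ## Clock constraints -/

/-- Comparison operators `<, ≤, =, ≥, >`. -/
inductive CCmp | lt | le | eq | ge | gt

/-- Evaluation of a comparison operator on reals. -/
def CCmp.evalR : CCmp → ℝ → ℝ → Prop
  | .lt, a, b => a < b
  | .le, a, b => a ≤ b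
  | .eq, a, b => a = b
  | .ge, a, b => a ≥ b
  | .gt, a, b => a > b

/-- Clock constraints over the clocks `x_1, …, x_k` (indexed by `Fin k`, clock
`x_{i+1}` for `i : Fin k`): Boolean combinations of `x_i - x_j # d` and `x_i # d`. -/
inductive CC (k : ℕ)
  | diff (i j : Fin k) (op : CCmp) (d : ℕ) : CC k
  | single (i : Fin k) (op : CCmp) (d : ℕ) : CC k
  | not (c : CC k) : CC k
  | and (c₁ c₂ : CC k) : CC k

/-- `v ∈ c` : the valuation `v` satisfies the clock constraint `c`. -/
def CC.sat {k : ℕ} (v : Val k) : CC k → Prop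
  | .diff i j op d => op.evalR (v i.succ - v j.succ) (d : ℝ)
  | .single i op d => op.evalR (v i.succ) (d : ℝ)
  | .not c => ¬ c.sat v
  | .and c₁ c₂ => c₁.sat v ∧ c₂.sat v

/-- The position (in `η`) of an index `x ∈ K⁰ ∪ K¹`. -/
def posOf {k : ℕ} (η : PatSeq k) (x : Fin (k+1) × Bool) : ℕ :=
  η.findIdx fun p => decide (x ∈ p)

/-- The truth value, given by pattern `η`, of the fractional ordering
`fract(x_a) > fract(x_b)`. -/
def fracGtP {k : ℕ} (η : PatSeq k) (a b : Fin (k+1)) : Prop :=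
  let i := posOf η ((0 : Fin (k+1)), true)
  let m₁ := posOf η (a, true)
  let m₂ := posOf η (b, true)
  (m₁ < i ∧ i ≤ m₂) ∨ (m₂ < m₁ ∧ m₁ < i) ∨ (i ≤ m₂ ∧ m₂ < m₁)

/-- The truth value, given by pattern `η`, of `fract(x_a) = fract(x_b)`. -/
def fracEqP {k : ℕ} (η : PatSeq k) (a b : Fin (k+1)) : Prop :=
  posOf η (a, true) = posOf η (b, true)

/-- The truth value, given by pattern `η`, of `fract(x_a) = 0`. -/
def fracZeroP {k : ℕ} (η : PatSeq k) (a : Fin (k+1)) : Prop :=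
  posOf η (a, true) = posOf η ((0 : Fin (k+1)), true)

/-- `u ∈ c^η` : the discrete valuation `u` satisfies the constraint `c^η`, obtained by
rewriting `c` as `I(c)` over integral parts and fractional orderings and substituting the
truth values of the fractional orderings determined by the pattern `η`. -/
def CC.satP {k : ℕ} (η : PatSeq k) (u : DVal k) : CC k → Prop
  | .diff i j op d =>
      let I : ℤ := (u i.succ : ℤ) - (u j.succ : ℤ)
      (match op with
      | .lt => I < d ∨ (I = d ∧ fracGtP η j.succ i.succ)
      | .le => I < d ∨ (I = d ∧ (fracGtP η j.succ i.succ ∨ fracEqP η i.succ j.succ))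
      | .eq => I = d ∧ fracEqP η i.succ j.succ
      | .ge => I > d ∨ (I = d ∧ (fracGtP η i.succ j.succ ∨ fracEqP η i.succ j.succ))
      | .gt => I > d ∨ (I = d ∧ fracGtP η i.succ j.succ))
  | .single i op d =>
      let I : ℤ := (u i.succ : ℤ)
      (match op with
      | .lt => I < d
      | .le => I < d ∨ (I = d ∧ fracZeroP η i.succ)
      | .eq => I = d ∧ fracZeroP η i.succ
      | .ge => I ≥ d
      | .gt => I > d ∨ (I = d ∧ ¬ fracZeroP η i.succ))
  | .not c => ¬ c.satP η u
  | .and c₁ c₂ => c₁.satP η u ∧ c₂.satP η u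

/-! ## Pushdown timed automata -/

/-- A pushdown timed automaton `⟨S, {x₁,…,x_k}, Inv, R, Γ, PD⟩`:
`Inv` assigns an invariant to each state, `R s s' = (Rc s s', Rr s s')` assigns a reset
condition and a set of clock resets (a subset of `K⁺`) to each edge, and
`PD s s' = (PDa s s', PDw s s')` assigns a stack operation to each edge. -/
structure PTA (k : ℕ) (S : Type) (Γ : Type) where
  Inv : S → CC k
  Rc : S → S → CC k
  Rr : S → S → Finset (Fin (k+1))
  hRr : ∀ s s', (0 : Fin (k+1)) ∉ Rr s s'
  PDa : S → S → Γ
  PDw : S → S → List Γ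

/-- A configuration `(s, v, w)` of a PTA. -/
abbrev Config (k : ℕ) (S Γ : Type) := S × Val k × List Γ

/-- The one-step transition relation `→_A` of a PTA. -/
def Step {k : ℕ} {S Γ : Type} (A : PTA k S Γ) (c₁ c₂ : Config k S Γ) : Prop :=
  -- progress transition
  (c₁.1 = c₂.1 ∧ c₁.2.2 = c₂.2.2 ∧
    ∃ δ : ℝ, 0 < δ ∧ c₂.2.1 = shift c₁.2.1 δ ∧
      ∀ δ', 0 ≤ δ' → δ' ≤ δ → (A.Inv c₁.1).sat (shift c₁.2.1 δ')) ∨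
  -- reset transition
  ((A.Inv c₁.1).sat c₁.2.1 ∧ (A.Rc c₁.1 c₂.1).sat c₁.2.1 ∧
    c₂.2.1 = resetVal (A.Rr c₁.1 c₂.1) c₁.2.1 ∧ (A.Inv c₂.1).sat c₂.2.1 ∧
    ∃ w : List Γ, c₁.2.2 = A.PDa c₁.1 c₂.1 :: w ∧ c₂.2.2 = A.PDw c₁.1 c₂.1 ++ w)

/-- `→*_A`, the transitive closure of `→_A`. -/
def Reach {k : ℕ} {S Γ : Type} (A : PTA k S Γ) : Config k S Γ → Config k S Γ → Prop :=
  Relation.TransGen (Step A)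

/-- `(s₀,u₀,w₀) →*_{A,η} (s₁,u₁,w₁)`. -/
def ReachPat {k : ℕ} {S Γ : Type} (A : PTA k S Γ) (η : PatSeq k)
    (s₀ : S) (u₀ : DVal k) (w₀ : List Γ) (s₁ : S) (u₁ : DVal k) (w₁ : List Γ) : Prop :=
  ∃ v₀ v₁ : Val k, IsVal v₀ ∧ IsVal v₁ ∧ v₀ 0 = 0 ∧
    intPart v₀ = u₀ ∧ intPart v₁ = u₁ ∧ PatternOf v₀ v₁ η ∧
    Reach A (s₀, v₀, w₀) (s₁, v₁, w₁)

/-! ## The pattern graph -/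

/-- A configuration `(s, η, u, w)` of the pattern graph. -/
abbrev GConfig (k : ℕ) (S Γ : Type) := S × PatSeq k × DVal k × List Γ

/-- The one-step transition relation `→_G` of the pattern graph `G` of a PTA `A`,
through progress edges, stay edges and reset edges. -/
def GStep {k : ℕ} {S Γ : Type} (A : PTA k S Γ) (c₁ c₂ : GConfig k S Γ) : Prop :=
  -- progress edge
  (c₁.1 = c₂.1 ∧ c₁.2.2.2 = c₂.2.2.2 ∧
    nextPair c₁.2.1 c₁.2.2.1 = (c₂.2.1, c₂.2.2.1) ∧
    (A.Inv c₁.1).satP c₁.2.1 c₁.2.2.1 ∧ (A.Inv c₁.1).satP c₂.2.1 c₂.2.2.1) ∨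
  -- stay edge
  (c₁ = c₂ ∧ IsMergePat c₁.2.1 ∧ (A.Inv c₁.1).satP c₁.2.1 c₁.2.2.1) ∨
  -- reset edge
  (resetPair (A.Rr c₁.1 c₂.1) c₁.2.1 c₁.2.2.1 = (c₂.2.1, c₂.2.2.1) ∧
    ((A.Rc c₁.1 c₂.1).and (A.Inv c₁.1)).satP c₁.2.1 c₁.2.2.1 ∧
    (A.Inv c₂.1).satP c₂.2.1 c₂.2.2.1 ∧
    ∃ w : List Γ, c₁.2.2.2 = A.PDa c₁.1 c₂.1 :: w ∧ c₂.2.2.2 = A.PDw c₁.1 c₂.1 ++ w)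

/-- `→*_G`, the transitive closure of `→_G`. -/
def GReach {k : ℕ} {S Γ : Type} (A : PTA k S Γ) : GConfig k S Γ → GConfig k S Γ → Prop :=
  Relation.TransGen (GStep A)

end PTApaper
namespace PTApaper

/-!
Clock `0` is never reset, so it measures the time since the start, and `v i - v 0` is the negated
time at which clock `i` was last reset. Apply to negated time an increasing bijection of `ℝ`
commuting with integer translations. Since clock constraints only compare differences of such times
with integers, this preserves all constraints, hence maps runs to runs. Two initialized pairs with
the same pattern have their relative fractional parts in the same order in `[0, 1)`, and a
piecewise linear map of the circle carries the one family to the other; given that the integral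
parts agree, it carries one pair of valuations to the other.
-/

section OrderIso

variable {𝕜 : Type*} [Field 𝕜] [LinearOrder 𝕜] [IsStrictOrderedRing 𝕜]

theorem exists_orderIso_fixing_Iic {b p q : 𝕜} (hp : b < p) (hq : b < q) :
    ∃ ψ : 𝕜 ≃o 𝕜, (∀ x ≤ b, ψ x = x) ∧ ψ p = q := by
  let stretch (c x : 𝕜) : 𝕜 := if x ≤ b then x else b + c * (x - b)
  have strictMono_stretch {c : 𝕜} (hc : 0 < c) : StrictMono (stretch c) := by
    refine strictMono_id.ite' (g := fun x => b + c * (x - b)) (fun x y hxy => ?_)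
      (fun _ _ hxy hy => hxy.le.trans hy) fun {x y} hx hy _ => ?_
    · dsimp only
      gcongr
    · exact hx.trans_lt (lt_add_of_pos_right b (mul_pos hc (sub_pos.2 (not_le.1 hy))))
  have rightInverse_stretch {c : 𝕜} (hc : 0 < c) :
      Function.RightInverse (stretch c⁻¹) (stretch c) := by
    intro x
    rcases le_or_gt x b with hx | hx
    · simp only [stretch, if_pos hx]
    · have hlt : b < b + c⁻¹ * (x - b) :=
        lt_add_of_pos_right b (mul_pos (inv_pos.2 hc) (sub_pos.2 hx))
      simp only [stretch, if_neg hx.not_ge, if_neg hlt.not_ge, add_sub_cancel_left,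
        mul_inv_cancel_left₀ hc.ne', add_sub_cancel]
  have slope_pos : 0 < (q - b) / (p - b) := div_pos (sub_pos.2 hq) (sub_pos.2 hp)
  refine ⟨(strictMono_stretch slope_pos).orderIsoOfRightInverse _ _
    (rightInverse_stretch slope_pos), fun x hx => if_pos hx, (if_neg hp.not_ge).trans ?_⟩
  rw [div_mul_cancel₀ _ (sub_pos.2 hp).ne', add_sub_cancel]

theorem exists_orderIso_map_eq_on_finset {ι : Type*} (f g : ι → 𝕜) (s : Finset ι)
    (h : ∀ i ∈ s, ∀ j ∈ s, f i < f j ↔ g i < g j) :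
    ∃ φ : 𝕜 ≃o 𝕜, ∀ i ∈ s, φ (f i) = g i := by
  classical
  induction s using Finset.induction_on_max_value f with
  | empty => exact ⟨OrderIso.refl 𝕜, by simp⟩
  | insert a s _ hmax ih =>
    obtain ⟨φ, hφ⟩ := ih fun i hi j hj =>
      h i (Finset.mem_insert_of_mem hi) j (Finset.mem_insert_of_mem hj)
    by_cases hlt : ∀ i ∈ s, f i < f a
    · have separated : ∀ x ∈ s.image g, ∀ y ∈ ({φ (f a), g a} : Finset 𝕜), x < y := by
        simp only [Finset.forall_mem_image, Finset.mem_insert, Finset.mem_singleton,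
          forall_eq_or_imp, forall_eq]
        exact fun i hi => ⟨hφ i hi ▸ φ.strictMono (hlt i hi),
          (h i (by simp [hi]) a (by simp)).1 (hlt i hi)⟩
      obtain ⟨b, hb, hb'⟩ := Order.exists_between_finsets _ _ separated
      obtain ⟨ψ, hψ, hψa⟩ :=
        exists_orderIso_fixing_Iic (hb' (φ (f a)) (by simp)) (hb' (g a) (by simp))
      refine ⟨φ.trans ψ, (Finset.forall_mem_insert ..).2 ⟨hψa, fun i hi => ?_⟩⟩
      rw [OrderIso.trans_apply, hφ i hi, hψ _ (hb _ (Finset.mem_image_of_mem g hi)).le]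
    · push Not at hlt
      obtain ⟨i, hi, hia⟩ := hlt
      have hfia : f i = f a := (hmax i hi).antisymm hia
      have hgia : g i = g a := by
        apply le_antisymm <;> rw [← not_lt, ← h _ (by simp [hi]) _ (by simp [hi]), hfia] <;> simp
      exact ⟨φ, (Finset.forall_mem_insert ..).2 ⟨by rw [← hfia, hφ i hi, hgia], hφ⟩⟩

end OrderIso

section PeriodicLift

theorem mapsTo_Ico_of_map_zero_of_map_one {φ : ℝ → ℝ} (hφ : StrictMono φ) (h0 : φ 0 = 0)
    (h1 : φ 1 = 1) : Set.MapsTo φ (Set.Ico 0 1) (Set.Ico 0 1) :=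
  fun _ hx => ⟨h0.symm.trans_le (hφ.monotone hx.1), (hφ hx.2).trans_eq h1⟩

/-- The lift of a circle map that agrees on `[0, 1)` with a given `φ` fixing `0` and `1`. -/
noncomputable def periodicLift (φ : ℝ → ℝ) (hφ : StrictMono φ) (h0 : φ 0 = 0) (h1 : φ 1 = 1) :
    CircleDeg1Lift where
  toFun x := ⌊x⌋ + φ (Int.fract x)
  monotone' x y hxy := by
    have hmaps (z : ℝ) := mapsTo_Ico_of_map_zero_of_map_one hφ h0 h1
      ⟨Int.fract_nonneg z, Int.fract_lt_one z⟩
    rcases (Int.floor_mono hxy).lt_or_eq with hlt | heq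
    · have : (⌊x⌋ : ℝ) + 1 ≤ ⌊y⌋ := mod_cast hlt
      linarith [(hmaps x).2, (hmaps y).1]
    · have : Int.fract x ≤ Int.fract y := by
        simpa only [Int.fract, heq, sub_le_sub_iff_right] using hxy
      simpa only [heq, add_le_add_iff_left] using hφ.monotone this
  map_add_one' x := by
    rw [Int.floor_add_one, Int.fract_add_one]
    push_cast
    ring

variable {φ ψ : ℝ → ℝ} (hφ : StrictMono φ) (h0 : φ 0 = 0) (h1 : φ 1 = 1)

theorem periodicLift_of_mem_Ico {x : ℝ} (hx : x ∈ Set.Ico 0 1) :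
    periodicLift φ hφ h0 h1 x = φ x := by
  change ⌊x⌋ + φ (Int.fract x) = φ x
  rw [Int.floor_eq_zero_iff.2 hx, Int.fract_eq_self.2 hx, Int.cast_zero, zero_add]

theorem periodicLift_mul_eq_one (hψ : StrictMono ψ) (h0' : ψ 0 = 0) (h1' : ψ 1 = 1)
    (h : Function.LeftInverse φ ψ) :
    periodicLift φ hφ h0 h1 * periodicLift ψ hψ h0' h1' = 1 := by
  ext x
  have hmem : ψ (Int.fract x) ∈ Set.Ico 0 1 :=
    mapsTo_Ico_of_map_zero_of_map_one hψ h0' h1' ⟨Int.fract_nonneg x, Int.fract_lt_one x⟩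
  calc periodicLift φ hφ h0 h1 (⌊x⌋ + ψ (Int.fract x))
    _ = ⌊x⌋ + φ (ψ (Int.fract x)) := by
      rw [CircleDeg1Lift.map_int_add, periodicLift_of_mem_Ico _ _ _ hmem]
    _ = x := by rw [h, Int.floor_add_fract]

theorem exists_circleDeg1Lift_units_eqOn_Ico (φ : ℝ ≃o ℝ) (h0 : φ 0 = 0) (h1 : φ 1 = 1) :
    ∃ Φ : CircleDeg1Liftˣ, Set.EqOn Φ φ (Set.Ico 0 1) := by
  have h0' : φ.symm 0 = 0 := φ.symm_apply_eq.2 h0.symm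
  have h1' : φ.symm 1 = 1 := φ.symm_apply_eq.2 h1.symm
  exact ⟨⟨periodicLift φ φ.strictMono h0 h1, periodicLift φ.symm φ.symm.strictMono h0' h1',
    periodicLift_mul_eq_one _ _ _ _ _ _ φ.apply_symm_apply,
    periodicLift_mul_eq_one _ _ _ _ _ _ φ.symm_apply_apply⟩,
    fun _ => periodicLift_of_mem_Ico φ.strictMono h0 h1⟩

theorem exists_circleDeg1Lift_units_map_eq {ι : Type*} [Finite ι] {f g : ι → ℝ}
    (hf : ∀ i, f i ∈ Set.Ico 0 1) (hg : ∀ i, g i < 1) (h : ∀ i j, f i < f j ↔ g i < g j)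
    {o : ι} (hfo : f o = 0) (hgo : g o = 0) :
    ∃ Φ : CircleDeg1Liftˣ, ∀ i, Φ (f i) = g i := by
  cases nonempty_fintype ι
  -- The extra index `none` pins the right endpoint `1` of the fundamental domain.
  have hlt : ∀ i j : Option ι, i.elim 1 f < j.elim 1 f ↔ i.elim 1 g < j.elim 1 g := by
    rintro (_ | i) (_ | j)
    · simp
    · exact iff_of_false (hf j).2.not_gt (hg j).not_gt
    · exact iff_of_true (hf i).2 (hg i)
    · exact h i j
  obtain ⟨φ, hφ⟩ := exists_orderIso_map_eq_on_finset (fun i : Option ι => i.elim 1 f)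
    (fun i => i.elim 1 g) Finset.univ fun i _ j _ => hlt i j
  have hφf (i : ι) : φ (f i) = g i := hφ (some i) (Finset.mem_univ _)
  obtain ⟨Φ, hΦ⟩ := exists_circleDeg1Lift_units_eqOn_Ico φ (by simpa only [hfo, hgo] using hφf o)
    (hφ none (Finset.mem_univ _))
  exact ⟨Φ, fun i => (hΦ (hf i)).trans (hφf i)⟩

end PeriodicLift

section CircleUnits

variable (Φ : CircleDeg1Liftˣ)

theorem strictMono_circleDeg1Lift_units : StrictMono Φ :=
  (CircleDeg1Lift.toOrderIso Φ).strictMono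

theorem CCmp.evalR_sub_iff (op : CCmp) (x y z : ℝ) :
    op.evalR (x - y) z ↔ op.evalR x (y + z) := by
  cases op
  · exact sub_lt_iff_lt_add'
  · exact sub_le_iff_le_add'
  · exact sub_eq_iff_eq_add'
  · exact le_sub_iff_add_le'
  · exact lt_sub_iff_add_lt'

theorem CCmp.evalR_map_iff {f : ℝ → ℝ} (hf : StrictMono f) (op : CCmp) (x y : ℝ) :
    op.evalR (f x) (f y) ↔ op.evalR x y := by
  cases op
  · exact hf.lt_iff_lt
  · exact hf.le_iff_le
  · exact hf.injective.eq_iff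
  · exact hf.le_iff_le
  · exact hf.lt_iff_lt

theorem CCmp.evalR_map_sub_map_iff (op : CCmp) (x y : ℝ) (d : ℤ) :
    op.evalR (Φ x - Φ y) d ↔ op.evalR (x - y) d := by
  rw [op.evalR_sub_iff, op.evalR_sub_iff, ← CircleDeg1Lift.map_add_int,
    op.evalR_map_iff (strictMono_circleDeg1Lift_units Φ)]

theorem floor_map_sub_map (x y : ℝ) : ⌊Φ x - Φ y⌋ = ⌊x - y⌋ :=
  eq_of_forall_le_iff fun d => by
    rw [Int.le_floor, Int.le_floor]
    exact CCmp.ge.evalR_map_sub_map_iff Φ x y d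

theorem fract_map_fract (f : CircleDeg1Lift) (x : ℝ) :
    Int.fract (f (Int.fract x)) = Int.fract (f x) := by
  rw [← Int.self_sub_floor x, CircleDeg1Lift.map_sub_int, Int.fract_sub_intCast]

end CircleUnits

section Retime

variable {k : ℕ} (Φ : CircleDeg1Liftˣ) (v : Val k)

/-- The valuation observed after time has been reparametrized by `Φ`. With clock `0` never reset,
`-v 0` is the negated current time and `v i - v 0` the negated time of the last reset of clock `i`;
`Φ` acts on negated times. -/
def retime : Val k := fun i => Φ (v i - v 0) - Φ (-v 0)

theorem floor_retime (i : Fin (k + 1)) : ⌊retime Φ v i⌋ = ⌊v i⌋ := by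
  rw [retime, floor_map_sub_map, sub_neg_eq_add, sub_add_cancel]

theorem intPart_retime : intPart (retime Φ v) = intPart v := by
  funext i
  rw [intPart, intPart, floor_retime]

variable {v} in
theorem IsVal.retime (hv : IsVal v) : IsVal (retime Φ v) := fun i => by
  rw [← Int.floor_nonneg, floor_retime]
  exact Int.floor_nonneg.2 (hv i)

theorem sat_retime_iff (c : CC k) : c.sat (retime Φ v) ↔ c.sat v := by
  induction c with
  | diff i j op d =>
    have := op.evalR_map_sub_map_iff Φ (v i.succ - v 0) (v j.succ - v 0) d
    simpa only [CC.sat, retime, sub_sub_sub_cancel_right, Int.cast_natCast] using this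
  | single i op d =>
    have := op.evalR_map_sub_map_iff Φ (v i.succ - v 0) (-v 0) d
    simpa only [CC.sat, retime, sub_neg_eq_add, sub_add_cancel, Int.cast_natCast] using this
  | not c ih => exact not_congr ih
  | and c₁ c₂ ih₁ ih₂ => exact and_congr ih₁ ih₂

theorem retime_shift (δ : ℝ) :
    retime Φ (shift v δ) = shift (retime Φ v) (Φ (-v 0) - Φ (-v 0 - δ)) := by
  funext i
  simp only [retime, shift, add_sub_add_right_eq_sub, neg_add']
  ring

theorem exists_shift_retime_eq {δ ε : ℝ} (hε : 0 ≤ ε) (hεδ : ε ≤ Φ (-v 0) - Φ (-v 0 - δ)) :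
    ∃ δ', 0 ≤ δ' ∧ δ' ≤ δ ∧ shift (retime Φ v) ε = retime Φ (shift v δ') := by
  have hΦ := strictMono_circleDeg1Lift_units Φ
  obtain ⟨y, hy⟩ : ∃ y, Φ y = Φ (-v 0) - ε := (CircleDeg1Lift.toOrderIso Φ).surjective _
  have y_le : y ≤ -v 0 := by rw [← hΦ.le_iff_le]; linarith
  have le_y : -v 0 - δ ≤ y := by rw [← hΦ.le_iff_le]; linarith
  refine ⟨-v 0 - y, by linarith, by linarith, ?_⟩
  rw [retime_shift, sub_sub_cancel, hy, sub_sub_cancel]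

theorem retime_resetVal {r : Finset (Fin (k + 1))} (hr : 0 ∉ r) :
    retime Φ (resetVal r v) = resetVal r (retime Φ v) := by
  funext i
  by_cases hi : i ∈ r <;> simp [retime, resetVal, hr, hi]

end Retime

section Runs

variable {k : ℕ} {S Γ : Type} {A : PTA k S Γ} (Φ : CircleDeg1Liftˣ)
  {s₁ s₂ : S} {v₁ v₂ : Val k} {w₁ w₂ : List Γ}

theorem Step.retime (h : Step A (s₁, v₁, w₁) (s₂, v₂, w₂)) :
    Step A (s₁, retime Φ v₁, w₁) (s₂, retime Φ v₂, w₂) := by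
  rcases h with ⟨hs, hw, δ, hδ, hshift, hInv⟩ | ⟨hInv₁, hguard, hreset, hInv₂, hstack⟩
  · refine Or.inl ⟨hs, hw, Φ (-v₁ 0) - Φ (-v₁ 0 - δ), ?_, ?_, fun ε hε hεδ => ?_⟩
    · exact sub_pos.2 (strictMono_circleDeg1Lift_units Φ (sub_lt_self _ hδ))
    · exact (congrArg (PTApaper.retime Φ) hshift).trans (retime_shift Φ v₁ δ)
    · obtain ⟨δ', hδ', hδ'δ, hretime⟩ := exists_shift_retime_eq Φ v₁ hε hεδ
      exact hretime ▸ (sat_retime_iff Φ _ _).2 (hInv δ' hδ' hδ'δ)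
  · exact Or.inr ⟨(sat_retime_iff Φ _ _).2 hInv₁, (sat_retime_iff Φ _ _).2 hguard,
      (congrArg (PTApaper.retime Φ) hreset).trans (retime_resetVal Φ v₁ (A.hRr s₁ s₂)),
      (sat_retime_iff Φ _ _).2 hInv₂, hstack⟩

theorem Reach.retime (h : Reach A (s₁, v₁, w₁) (s₂, v₂, w₂)) :
    Reach A (s₁, retime Φ v₁, w₁) (s₂, retime Φ v₂, w₂) :=
  Relation.TransGen.lift (fun c : Config k S Γ => (c.1, PTApaper.retime Φ c.2.1, c.2.2))
    (fun _ _ => Step.retime Φ) _ _ h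

end Runs

section RelFract

variable {k : ℕ} {v w : Val k}

theorem relFract_mem_Ico (v : Val k) (i : Fin (k + 1)) : relFract v i ∈ Set.Ico 0 1 := by
  unfold relFract
  split_ifs <;> exact ⟨Int.fract_nonneg _, Int.fract_lt_one _⟩

theorem relFract_zero (v : Val k) : relFract v 0 = Int.fract (-v 0) := by
  rw [relFract, if_pos rfl, Int.fract_eq_fract]
  refine ⟨1 + ⌊v 0⌋, ?_⟩
  simp only [Int.fract]
  push_cast
  ring

theorem relFract_of_ne_zero (v : Val k) {i : Fin (k + 1)} (hi : i ≠ 0) :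
    relFract v i = Int.fract (v i - v 0) := by
  rw [relFract, if_neg hi, Int.fract_eq_fract]
  refine ⟨1 + ⌊v 0⌋ - ⌊v i⌋ - ⌊1 - Int.fract (v 0)⌋, ?_⟩
  simp only [Int.fract]
  push_cast
  ring

theorem Initial.relFract_zero (hv : Initial v) : relFract v 0 = 0 := by
  rw [PTApaper.relFract_zero, show v 0 = 0 from hv, neg_zero, Int.fract_zero]

theorem relFract_retime {Φ : CircleDeg1Liftˣ} (hΦ : Φ 0 = 0) (v : Val k) (i : Fin (k + 1)) :
    relFract (retime Φ v) i = Int.fract (Φ (relFract v i)) := by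
  by_cases hi : i = 0
  · subst hi
    rw [relFract_zero, relFract_zero, fract_map_fract, retime, sub_self, hΦ, zero_sub, neg_neg]
  · rw [relFract_of_ne_zero _ hi, relFract_of_ne_zero _ hi, fract_map_fract, retime, retime,
      sub_sub_sub_cancel_right, sub_self, hΦ, sub_zero]

theorem fract_eq_of_relFract_eq (h : relFract v = relFract w) (i : Fin (k + 1)) :
    Int.fract (v i) = Int.fract (w i) := by
  have h0 := congrFun h 0
  rw [relFract_zero, relFract_zero, Int.fract_eq_fract] at h0
  obtain ⟨m, hm⟩ := h0
  rw [Int.fract_eq_fract]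
  by_cases hi : i = 0
  · exact ⟨-m, by rw [hi]; push_cast; linarith⟩
  · have hi' := congrFun h i
    rw [relFract_of_ne_zero _ hi, relFract_of_ne_zero _ hi, Int.fract_eq_fract] at hi'
    obtain ⟨n, hn⟩ := hi'
    exact ⟨n - m, by push_cast; linarith⟩

theorem IsVal.eq_of_intPart_eq_of_relFract_eq (hv : IsVal v) (hw : IsVal w)
    (hint : intPart v = intPart w) (hrel : relFract v = relFract w) : v = w := by
  funext i
  have hfloor : ⌊v i⌋ = ⌊w i⌋ := by
    rw [← Int.toNat_of_nonneg (Int.floor_nonneg.2 (hv i)),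
      ← Int.toNat_of_nonneg (Int.floor_nonneg.2 (hw i))]
    exact congrArg Nat.cast (congrFun hint i)
  rw [← Int.floor_add_fract (v i), ← Int.floor_add_fract (w i), hfloor,
    fract_eq_of_relFract_eq hrel i]

theorem IsVal.retime_eq {Φ : CircleDeg1Liftˣ} (hΦ : Φ 0 = 0) (hv : IsVal v) (hw : IsVal w)
    (hint : intPart v = intPart w) (hrel : ∀ i, Φ (relFract v i) = relFract w i) :
    PTApaper.retime Φ v = w :=
  (hv.retime Φ).eq_of_intPart_eq_of_relFract_eq hw ((intPart_retime Φ v).trans hint) <| by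
    funext i
    rw [relFract_retime hΦ, hrel, Int.fract_eq_self.2 (relFract_mem_Ico w i)]

end RelFract

section OrderedFibers

variable {α β : Type*} [Fintype α] [LinearOrder β] (f : α → β)

/-- The fibers of `f`, listed in increasing order of the value taken on them. -/
def orderedFibers : List (Finset α) :=
  ((Finset.univ.image f).sort (· ≤ ·)).map fun b => Finset.univ.filter (f · = b)

theorem length_orderedFibers_le : (orderedFibers f).length ≤ Fintype.card α := by
  rw [orderedFibers, List.length_map, Finset.length_sort]
  exact Finset.card_image_le

theorem nonempty_of_mem_orderedFibers {p : Finset α} (hp : p ∈ orderedFibers f) :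
    p.Nonempty := by
  simp only [orderedFibers, List.mem_map, Finset.mem_sort, Finset.mem_image, Finset.mem_univ,
    true_and] at hp
  obtain ⟨_, ⟨a, rfl⟩, rfl⟩ := hp
  exact ⟨a, by simp⟩

theorem exists_mem_orderedFibers (a : α) : ∃ p ∈ orderedFibers f, a ∈ p :=
  ⟨_, List.mem_map_of_mem (by simp : f a ∈ _), by simp⟩

variable {f}

theorem mem_get_orderedFibers_iff {m : Fin (orderedFibers f).length} {a : α} :
    a ∈ (orderedFibers f).get m ↔
      f a = ((Finset.univ.image f).sort (· ≤ ·)).get (m.cast (List.length_map _)) := by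
  rw [List.get_eq_getElem]
  simp only [orderedFibers, List.getElem_map, Finset.mem_filter, Finset.mem_univ, true_and]
  rfl

theorem eq_and_lt_iff_of_mem_get_orderedFibers {m n : Fin (orderedFibers f).length} {a b : α}
    (ha : a ∈ (orderedFibers f).get m) (hb : b ∈ (orderedFibers f).get n) :
    (f a = f b ↔ m = n) ∧ (f a < f b ↔ m < n) := by
  have hmono := (Finset.sortedLT_sort (Finset.univ.image f)).strictMono_get
  rw [mem_get_orderedFibers_iff.1 ha, mem_get_orderedFibers_iff.1 hb, hmono.injective.eq_iff,
    hmono.lt_iff_lt]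
  exact ⟨Fin.cast_inj _, Iff.rfl⟩

variable (f) in
theorem pairwise_disjoint_orderedFibers : (orderedFibers f).Pairwise Disjoint :=
  List.pairwise_iff_get.2 fun _ _ hmn => Finset.disjoint_left.2 fun _ ha hb =>
    hmn.ne ((eq_and_lt_iff_of_mem_get_orderedFibers ha hb).1.1 rfl)

theorem mem_head_orderedFibers {a : α} (ha : ∀ b, f a ≤ f b) :
    a ∈ (orderedFibers f).getD 0 ∅ := by
  obtain ⟨p, hp, hap⟩ := exists_mem_orderedFibers f a
  obtain ⟨m, rfl⟩ := List.get_of_mem hp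
  obtain ⟨b, hb⟩ := nonempty_of_mem_orderedFibers f (List.get_mem _ ⟨0, m.pos⟩)
  have hm : ¬ (⟨0, m.pos⟩ : Fin _) < m := fun hlt =>
    (ha b).not_gt ((eq_and_lt_iff_of_mem_get_orderedFibers hb hap).2.2 hlt)
  rw [List.getD_eq_getElem _ _ m.pos]
  exact (not_lt.1 hm).antisymm (Nat.zero_le _) ▸ hap

end OrderedFibers

section Patterns

/-- The relative fractional parts of a pair of valuations, as one family indexed by `K⁰ ∪ K¹`. -/
noncomputable def relFractPair {k : ℕ} (v₀ v₁ : Val k) (x : Fin (k + 1) × Bool) : ℝ :=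
  relFract (bval v₀ v₁ x.2) x.1

variable {k : ℕ} {v₀ v₁ v₀' v₁' : Val k}

theorem relFractPair_mem_Ico (v₀ v₁ : Val k) (x : Fin (k + 1) × Bool) :
    relFractPair v₀ v₁ x ∈ Set.Ico 0 1 :=
  relFract_mem_Ico _ _

theorem Initial.relFractPair_eq_zero (h0 : Initial v₀) (v₁ : Val k) :
    relFractPair v₀ v₁ (0, false) = 0 :=
  h0.relFract_zero

theorem Initial.patternOf_orderedFibers (h0 : Initial v₀) (v₁ : Val k) :
    PatternOf v₀ v₁ (orderedFibers (relFractPair v₀ v₁)) := by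
  refine ⟨⟨?_, fun _ => nonempty_of_mem_orderedFibers _, pairwise_disjoint_orderedFibers _,
    mem_head_orderedFibers fun x => ?_, exists_mem_orderedFibers _⟩,
    fun _ _ _ _ _ _ => eq_and_lt_iff_of_mem_get_orderedFibers⟩
  · simpa [mul_comm] using length_orderedFibers_le (relFractPair v₀ v₁)
  · exact (h0.relFractPair_eq_zero v₁).trans_le (relFractPair_mem_Ico v₀ v₁ x).1

theorem PatternOf.relFractPair_lt_iff {η : PatSeq k} (h : PatternOf v₀ v₁ η)
    (h' : PatternOf v₀' v₁' η) (x y : Fin (k + 1) × Bool) :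
    relFractPair v₀ v₁ x < relFractPair v₀ v₁ y ↔
      relFractPair v₀' v₁' x < relFractPair v₀' v₁' y := by
  obtain ⟨p, hp, hx⟩ := h.1.2.2.2.2 x
  obtain ⟨q, hq, hy⟩ := h.1.2.2.2.2 y
  obtain ⟨m, rfl⟩ := List.get_of_mem hp
  obtain ⟨n, rfl⟩ := List.get_of_mem hq
  exact (h.2 m n _ _ _ _ hx hy).2.trans (h'.2 m n _ _ _ _ hx hy).2.symm

theorem PairEquiv.exists_retime_eq (h : PairEquiv v₀ v₁ v₀' v₁') (h0 : Initial v₀)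
    (h0' : Initial v₀') (hv₀ : IsVal v₀) (hv₁ : IsVal v₁) (hv₀' : IsVal v₀') (hv₁' : IsVal v₁') :
    ∃ Φ : CircleDeg1Liftˣ, retime Φ v₀ = v₀' ∧ retime Φ v₁ = v₁' := by
  obtain ⟨⟨η, hη, hη'⟩, hint₀, hint₁⟩ := h
  obtain ⟨Φ, hΦ⟩ := exists_circleDeg1Lift_units_map_eq (relFractPair_mem_Ico v₀ v₁)
    (fun x => (relFractPair_mem_Ico v₀' v₁' x).2) (hη.relFractPair_lt_iff hη')
    (h0.relFractPair_eq_zero v₁) (h0'.relFractPair_eq_zero v₁')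
  have hΦ0 : Φ 0 = 0 := by
    simpa only [h0.relFractPair_eq_zero, h0'.relFractPair_eq_zero] using hΦ (0, false)
  exact ⟨Φ, hv₀.retime_eq hΦ0 hv₀' hint₀ fun i => hΦ (i, false),
    hv₁.retime_eq hΦ0 hv₁' hint₁ fun i => hΦ (i, true)⟩

end Patterns

theorem character_general {k : ℕ} {S Γ : Type} (A : PTA k S Γ) (s₀ s₁ : S) {v₀ v₁ : Val k}
    (hv₀ : IsVal v₀) (hv₁ : IsVal v₁) (h0 : Initial v₀) (w₀ w₁ : List Γ) :
    Reach A (s₀, v₀, w₀) (s₁, v₁, w₁) ↔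
      ∃ η : PatSeq k, PatternOf v₀ v₁ η ∧
        ReachPat A η s₀ (intPart v₀) w₀ s₁ (intPart v₁) w₁ := by
  constructor
  · intro hreach
    have hη := h0.patternOf_orderedFibers v₁
    exact ⟨_, hη, v₀, v₁, hv₀, hv₁, h0, rfl, rfl, hη, hreach⟩
  · rintro ⟨η, hη, v₀', v₁', hv₀', hv₁', h0', hint₀, hint₁, hη', hreach⟩
    have hequiv : PairEquiv v₀' v₁' v₀ v₁ := ⟨⟨η, hη', hη⟩, hint₀, hint₁⟩
    obtain ⟨Φ, rfl, rfl⟩ := hequiv.exists_retime_eq h0' h0 hv₀' hv₁' hv₀ hv₁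
    exact hreach.retime Φ

/-- Lemma `character`. Let `A` be a PTA. For any states `s₀, s₁`, any
initialized pair `(v₀,v₁)` and any stack words `w₀, w₁`:
`(s₀,v₀,w₀) →*_A (s₁,v₁,w₁)` iff there is a pattern `η` with `(v₀,v₁) ∈ η` and
`(s₀,int(v₀),w₀) →*_{A,η} (s₁,int(v₁),w₁)`. -/
theorem character (k : ℕ) (hk : 1 ≤ k) {S Γ : Type} [Fintype S] [Fintype Γ]
    (A : PTA k S Γ) (s₀ s₁ : S)
    (v₀ v₁ : Val k) (hv₀ : IsVal v₀) (hv₁ : IsVal v₁) (h0 : Initial v₀)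
    (w₀ w₁ : List Γ) :
    Reach A (s₀, v₀, w₀) (s₁, v₁, w₁) ↔
      ∃ η : PatSeq k, PatternOf v₀ v₁ η ∧
        ReachPat A η s₀ (intPart v₀) w₀ s₁ (intPart v₁) w₁ :=
  character_general A s₀ s₁ hv₀ hv₁ h0 w₀ w₁

end PTApaper
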